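/- arXiv:2003.13190 — 2 statements merged into one kernel-verified Lean document; each statement's English description precedes it below -/
import Mathlib

section
/- Let n = n_A + n_B, ħ > 0, and let Σ be a real symmetric 2n×2n matrix. The following are equivalent: (i) there exist real symmetric matrices Σ_A (2n_A×2n_A) and Σ_B (2n_B×2n_B) with Σ_A + (iħ/2)J_{n_A} ≥ 0, Σ_B + (iħ/2)J_{n_B} ≥ 0, and Σ − (Σ_A ⊕ Σ_B) positive semidefinite; (ii) there exist S_A ∈ Sp(n_A) and S_B ∈ Sp(n_B) such that Σ − (ħ/2)((S_Aᵀ S_A)⁻¹ ⊕ (S_Bᵀ S_B)⁻¹) is positive semidefinite. -/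
open Matrix
open scoped ComplexOrder

noncomputable section

/-- The phase space index type for `ℝ^{2m}`, split as positions ⊕ momenta. -/
abbrev PS (m : ℕ) := Fin m ⊕ Fin m

/-- The standard symplectic matrix `J_m = [[0, I_m], [-I_m, 0]]`. -/
def symplJ (m : ℕ) : Matrix (PS m) (PS m) ℝ := Matrix.fromBlocks 0 1 (-1) 0

/-- `S ∈ Sp(m)`: `Sᵀ J_m S = J_m`. -/
def IsSymplectic {m : ℕ} (S : Matrix (PS m) (PS m) ℝ) : Prop :=
  Sᵀ * symplJ m * S = symplJ m

/-- The quantum condition `Σ + (i·hbar/2) J_m ≥ 0`, i.e. the complex Hermitian matrix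
`Σ + (i·hbar/2) J_m` is positive semidefinite. -/
def QuantumCond (m : ℕ) (hbar : ℝ) (Sig : Matrix (PS m) (PS m) ℝ) : Prop :=
  (Sig.map Complex.ofReal + (hbar / 2 : ℝ) • Complex.I • (symplJ m).map Complex.ofReal).PosSemidef

/-- `μ ∈ ℂ` is an eigenvalue of the real matrix `N` (viewed as a complex matrix). -/
def IsEigenvalue {ι : Type} [Fintype ι] [DecidableEq ι] (N : Matrix ι ι ℝ) (μ : ℂ) : Prop :=
  (N.map Complex.ofReal - μ • 1).det = 0

/-!
Realification and a Schur complement turn the quantum condition on `(ħ/2) M` into `M > 0` and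
`Jᵀ M⁻¹ J ≤ M`. The symplectic matrix to put below `M` is the geometric mean `M # (Jᵀ M⁻¹ J)`: the
map `M ↦ Jᵀ M⁻¹ J` is an involution commuting with the geometric mean, so it only swaps the two
arguments and fixes their mean, and the positive definite fixed points are exactly the positive
definite symplectic matrices; moreover `B ≤ A` gives `A # B ≤ A`. Finally a positive definite
symplectic `P` has the symplectic square root `1 # P`, so that `P = (Sᵀ S)⁻¹` with `S = (1 # P)⁻¹`.
-/

section GeometricMean

open scoped MatrixOrder

lemma le_one_of_mul_self_le_one {𝓐 : Type*} [Ring 𝓐] [PartialOrder 𝓐] [StarRing 𝓐]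
    [StarOrderedRing 𝓐] [Algebra ℝ 𝓐] [StarModule ℝ 𝓐] {a : 𝓐} (ha : IsSelfAdjoint a)
    (h : a * a ≤ 1) : a ≤ 1 := by
  have hsq : 0 ≤ (1 - a) * (1 - a) := ((IsSelfAdjoint.one _).sub ha).mul_self_nonneg
  have hsum : 1 - a = (2⁻¹ : ℝ) • ((1 - a) * (1 - a) + (1 - a * a)) := by
    rw [show (1 - a) * (1 - a) + (1 - a * a) = (2 : ℝ) • (1 - a) by rw [two_smul]; noncomm_ring,
      inv_smul_smul₀ two_ne_zero]
  rw [← sub_nonneg, hsum]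
  exact smul_nonneg (by positivity) (add_nonneg hsq (sub_nonneg.mpr h))

variable {ι 𝕜 : Type*} [Fintype ι] [RCLike 𝕜] {A B P : Matrix ι ι 𝕜}

lemma posDef_mul_mul_self_of_posDef (hA : A.PosDef) (hB : B.PosDef) : (A * B * A).PosDef := by
  classical simpa only [hA.isHermitian.eq] using
    hB.mul_mul_conjTranspose_same (vecMul_injective_of_isUnit hA.isUnit)

variable [DecidableEq ι]

/-- The geometric mean `A # B` of positive definite matrices, in its closed form
`A^{1/2} (A^{-1/2} B A^{-1/2})^{1/2} A^{1/2}`. It is the positive solution `P` of the Riccati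
equation `P A⁻¹ P = B`. -/
def matrixGeomMean (A B : Matrix ι ι 𝕜) : Matrix ι ι 𝕜 :=
  CFC.sqrt A * CFC.sqrt ((CFC.sqrt A)⁻¹ * B * (CFC.sqrt A)⁻¹) * CFC.sqrt A

lemma posDef_sqrt (hA : A.PosDef) : (CFC.sqrt A).PosDef :=
  hA.isStrictlyPositive.sqrt.posDef

lemma sqrt_inv_mul_sqrt_inv (hA : A.PosSemidef) : (CFC.sqrt A)⁻¹ * (CFC.sqrt A)⁻¹ = A⁻¹ := by
  rw [← Matrix.mul_inv_rev, CFC.sqrt_mul_sqrt_self A hA.nonneg]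

lemma posDef_matrixGeomMean (hA : A.PosDef) (hB : B.PosDef) : (matrixGeomMean A B).PosDef :=
  have hR := posDef_sqrt hA
  posDef_mul_mul_self_of_posDef hR (posDef_sqrt (posDef_mul_mul_self_of_posDef hR.inv hB))

lemma matrixGeomMean_mul_inv_mul_matrixGeomMean (hA : A.PosDef) (hB : B.PosSemidef) :
    matrixGeomMean A B * A⁻¹ * matrixGeomMean A B = B := by
  have hR := posDef_sqrt hA
  have hDD := CFC.sqrt_mul_sqrt_self _
    (hR.inv.isHermitian.isSelfAdjoint.conjugate_nonneg hB.nonneg)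
  rw [matrixGeomMean, ← sqrt_inv_mul_sqrt_inv hA.posSemidef]
  set R := CFC.sqrt A
  set D := CFC.sqrt (R⁻¹ * B * R⁻¹)
  have := hR.isUnit.invertible
  calc R * D * R * (R⁻¹ * R⁻¹) * (R * D * R)
      = R * (D * D) * R := by simp [mul_assoc]
    _ = B := by simp [hDD, mul_assoc]

lemma eq_matrixGeomMean (hA : A.PosDef) (hP : P.PosSemidef) (h : P * A⁻¹ * P = B) :
    P = matrixGeomMean A B := by
  have hR := posDef_sqrt hA
  have hsqrt : CFC.sqrt ((CFC.sqrt A)⁻¹ * B * (CFC.sqrt A)⁻¹) =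
      (CFC.sqrt A)⁻¹ * P * (CFC.sqrt A)⁻¹ := by
    refine CFC.sqrt_unique ?_ (hR.inv.isHermitian.isSelfAdjoint.conjugate_nonneg hP.nonneg)
    simp only [← h, ← sqrt_inv_mul_sqrt_inv hA.posSemidef, mul_assoc]
  have := hR.isUnit.invertible
  rw [matrixGeomMean, hsqrt]
  simp [mul_assoc]

lemma matrixGeomMean_comm (hA : A.PosDef) (hB : B.PosDef) :
    matrixGeomMean A B = matrixGeomMean B A := by
  have hP := posDef_matrixGeomMean hA hB
  refine eq_matrixGeomMean hB hP.posSemidef ?_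
  have := hP.isUnit.invertible
  have := hA.isUnit.invertible
  have hBinv := congrArg (·⁻¹) (matrixGeomMean_mul_inv_mul_matrixGeomMean hA hB.posSemidef)
  simp only [Matrix.mul_inv_rev, inv_inv_of_invertible] at hBinv
  simp [← hBinv, mul_assoc]

lemma matrixGeomMean_le_left (hA : A.PosDef) (hB : B.PosSemidef) (hBA : B ≤ A) :
    matrixGeomMean A B ≤ A := by
  have hR := posDef_sqrt hA
  have hRR : CFC.sqrt A * CFC.sqrt A = A := CFC.sqrt_mul_sqrt_self A hA.posSemidef.nonneg
  rw [matrixGeomMean]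
  set R := CFC.sqrt A
  have := hR.isUnit.invertible
  have hRinv := hR.inv.isHermitian.isSelfAdjoint
  have hle : R⁻¹ * B * R⁻¹ ≤ 1 := calc
    R⁻¹ * B * R⁻¹ ≤ R⁻¹ * A * R⁻¹ := hRinv.conjugate_le_conjugate hBA
    _ = 1 := by simp [← hRR]
  have hsqrt : CFC.sqrt (R⁻¹ * B * R⁻¹) ≤ 1 :=
    le_one_of_mul_self_le_one (CFC.sqrt_nonneg _).isSelfAdjoint <|
      (CFC.sqrt_mul_sqrt_self _ (hRinv.conjugate_nonneg hB.nonneg)).trans_le hle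
  calc R * CFC.sqrt (R⁻¹ * B * R⁻¹) * R ≤ R * 1 * R :=
        hR.isHermitian.isSelfAdjoint.conjugate_le_conjugate hsqrt
    _ = A := by rw [mul_one, hRR]

end GeometricMean

section SymplecticPolar

open scoped MatrixOrder

variable {l R : Type*} [Fintype l] [DecidableEq l] [CommRing R]

/-- The symplectic polar `Jᵀ M⁻¹ J` of `M`: if `M` is the covariance matrix of an ellipsoid, this
is that of its polar dual rotated by `J`. Its positive definite fixed points are the symplectic
ones. -/
def symplPolar (M : Matrix (l ⊕ l) (l ⊕ l) R) : Matrix (l ⊕ l) (l ⊕ l) R :=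
  (J l R)ᵀ * M⁻¹ * J l R

lemma J_transpose_mul_J : (J l R)ᵀ * J l R = 1 := by
  rw [J_transpose, neg_mul, J_squared, neg_neg]

lemma J_mul_J_transpose : J l R * (J l R)ᵀ = 1 :=
  mul_eq_one_comm.mp J_transpose_mul_J

lemma symplPolar_one : symplPolar (1 : Matrix (l ⊕ l) (l ⊕ l) R) = 1 := by
  rw [symplPolar, inv_one, mul_one, J_transpose_mul_J]

lemma inv_symplPolar (M : Matrix (l ⊕ l) (l ⊕ l) R) :
    (symplPolar M)⁻¹ = (J l R)ᵀ * M⁻¹⁻¹ * J l R := by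
  rw [symplPolar, Matrix.mul_inv_rev, Matrix.mul_inv_rev, inv_eq_right_inv J_mul_J_transpose,
    inv_eq_right_inv J_transpose_mul_J, mul_assoc]

lemma symplPolar_symplPolar {M : Matrix (l ⊕ l) (l ⊕ l) R} (hM : IsUnit M.det) :
    symplPolar (symplPolar M) = M := by
  rw [symplPolar, inv_symplPolar, nonsing_inv_nonsing_inv _ hM, J_transpose]
  calc -J l R * (-J l R * M * J l R) * J l R
      = (J l R * J l R) * M * (J l R * J l R) := by noncomm_ring
    _ = M := by simp [J_squared]

lemma symplPolar_mul_inv_symplPolar_mul_symplPolar (P A : Matrix (l ⊕ l) (l ⊕ l) R) :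
    symplPolar P * (symplPolar A)⁻¹ * symplPolar P = symplPolar (P * A⁻¹ * P) := by
  rw [inv_symplPolar]
  simp only [symplPolar, Matrix.mul_inv_rev]
  calc (J l R)ᵀ * P⁻¹ * J l R * ((J l R)ᵀ * A⁻¹⁻¹ * J l R) * ((J l R)ᵀ * P⁻¹ * J l R)
      = (J l R)ᵀ * P⁻¹ * (J l R * (J l R)ᵀ) * A⁻¹⁻¹ * (J l R * (J l R)ᵀ) * P⁻¹ * J l R := by
        simp only [mul_assoc]
    _ = (J l R)ᵀ * (P⁻¹ * (A⁻¹⁻¹ * P⁻¹)) * J l R := by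
        simp only [J_mul_J_transpose, mul_one, mul_assoc]

lemma symplPolar_eq_self_iff {P : Matrix (l ⊕ l) (l ⊕ l) R} (hP : P.IsSymm) (hdet : IsUnit P.det) :
    symplPolar P = P ↔ P ∈ symplecticGroup l R := by
  refine ⟨fun h => ?_, fun h => ?_⟩
  · rw [SymplecticGroup.mem_iff, hP.eq]
    calc P * J l R * P = P * (J l R * (J l R)ᵀ) * P⁻¹ * J l R := by
          nth_rw 2 [← h]
          simp only [symplPolar, mul_assoc]
      _ = J l R := by rw [J_mul_J_transpose, mul_one, mul_nonsing_inv _ hdet, one_mul]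
  · rw [symplPolar, SymplecticGroup.inv_eq_symplectic_inv P h, hP.eq, J_transpose]
    calc -J l R * (-J l R * P * J l R) * J l R
        = (J l R * J l R) * P * (J l R * J l R) := by noncomm_ring
      _ = P := by simp [J_squared]

lemma inv_mem_symplecticGroup {A : Matrix (l ⊕ l) (l ⊕ l) R} (hA : A ∈ symplecticGroup l R) :
    A⁻¹ ∈ symplecticGroup l R := by
  simpa only [SymplecticGroup.coe_inv'] using (⟨A, hA⟩⁻¹ : symplecticGroup l R).2

section Real

variable {M A B P S : Matrix (l ⊕ l) (l ⊕ l) ℝ}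

lemma posDef_symplPolar (hM : M.PosDef) : (symplPolar M).PosDef := by
  rw [symplPolar, ← conjTranspose_eq_transpose_of_trivial]
  exact hM.inv.conjTranspose_mul_mul_same
    (mulVec_injective_of_isUnit ((isUnit_iff_isUnit_det _).mpr (isUnit_det_J l ℝ)))

lemma symplPolar_matrixGeomMean (hA : A.PosDef) (hB : B.PosDef) :
    symplPolar (matrixGeomMean A B) = matrixGeomMean (symplPolar A) (symplPolar B) := by
  refine eq_matrixGeomMean (posDef_symplPolar hA)
    (posDef_symplPolar (posDef_matrixGeomMean hA hB)).posSemidef ?_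
  rw [symplPolar_mul_inv_symplPolar_mul_symplPolar,
    matrixGeomMean_mul_inv_mul_matrixGeomMean hA hB.posSemidef]

lemma symplPolar_eq_self_iff_of_posDef (hP : P.PosDef) :
    symplPolar P = P ↔ P ∈ symplecticGroup l ℝ :=
  symplPolar_eq_self_iff (isHermitian_iff_isSymm.mp hP.isHermitian)
    ((isUnit_iff_isUnit_det _).mp hP.isUnit)

lemma matrixGeomMean_symplPolar_mem_symplecticGroup (hM : M.PosDef) :
    matrixGeomMean M (symplPolar M) ∈ symplecticGroup l ℝ := by
  have hM' := posDef_symplPolar hM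
  rw [← symplPolar_eq_self_iff_of_posDef (posDef_matrixGeomMean hM hM'),
    symplPolar_matrixGeomMean hM hM',
    symplPolar_symplPolar ((isUnit_iff_isUnit_det _).mp hM.isUnit), matrixGeomMean_comm hM' hM]

lemma matrixGeomMean_one_mem_symplecticGroup (hP : P.PosDef) (hPs : P ∈ symplecticGroup l ℝ) :
    matrixGeomMean 1 P ∈ symplecticGroup l ℝ := by
  rw [← symplPolar_eq_self_iff_of_posDef (posDef_matrixGeomMean .one hP),
    symplPolar_matrixGeomMean .one hP, symplPolar_one,
    (symplPolar_eq_self_iff_of_posDef hP).mpr hPs]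

lemma exists_inv_transpose_mul_self_eq (hP : P.PosDef) (hPs : P ∈ symplecticGroup l ℝ) :
    ∃ S ∈ symplecticGroup l ℝ, (Sᵀ * S)⁻¹ = P := by
  have hG := posDef_matrixGeomMean .one hP
  have hGG := matrixGeomMean_mul_inv_mul_matrixGeomMean .one hP.posSemidef
  refine ⟨_, inv_mem_symplecticGroup (matrixGeomMean_one_mem_symplecticGroup hP hPs), ?_⟩
  rw [inv_one, mul_one] at hGG
  rw [transpose_nonsing_inv, isHermitian_iff_isSymm.mp hG.isHermitian, ← Matrix.mul_inv_rev, hGG,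
    nonsing_inv_nonsing_inv _ ((isUnit_iff_isUnit_det _).mp hP.isUnit)]

lemma exists_inv_transpose_mul_self_le (hM : M.PosDef) (h : symplPolar M ≤ M) :
    ∃ S ∈ symplecticGroup l ℝ, (Sᵀ * S)⁻¹ ≤ M := by
  have hM' := posDef_symplPolar hM
  obtain ⟨S, hS, hSM⟩ := exists_inv_transpose_mul_self_eq (posDef_matrixGeomMean hM hM')
    (matrixGeomMean_symplPolar_mem_symplecticGroup hM)
  exact ⟨S, hS, hSM.trans_le (matrixGeomMean_le_left hM hM'.posSemidef h)⟩

lemma posDef_inv_transpose_mul_self (hS : S ∈ symplecticGroup l ℝ) : (Sᵀ * S)⁻¹.PosDef := by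
  have hS' := (isUnit_iff_isUnit_det S).mpr (SymplecticGroup.symplectic_det hS)
  simpa only [conjTranspose_eq_transpose_of_trivial] using
    (PosDef.conjTranspose_mul_self S (mulVec_injective_of_isUnit hS')).inv

lemma symplPolar_inv_transpose_mul_self (hS : S ∈ symplecticGroup l ℝ) :
    symplPolar (Sᵀ * S)⁻¹ = (Sᵀ * S)⁻¹ :=
  (symplPolar_eq_self_iff_of_posDef (posDef_inv_transpose_mul_self hS)).mpr <|
    inv_mem_symplecticGroup (mul_mem (SymplecticGroup.transpose_mem hS) hS)

end Real

end SymplecticPolar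

section Uncertainty

open scoped MatrixOrder

lemma isHermitian_map_add_I_smul_map_iff {ι : Type*} {A B : Matrix ι ι ℝ} :
    (A.map Complex.ofReal + Complex.I • B.map Complex.ofReal).IsHermitian ↔
      (fromBlocks A (-B) B A).IsHermitian := by
  have hH : (A.map Complex.ofReal + Complex.I • B.map Complex.ofReal).IsHermitian ↔
      A.IsHermitian ∧ (-B)ᴴ = B := by
    simp [← Matrix.ext_iff, IsHermitian, Complex.ext_iff, forall_and]
  rw [hH, isHermitian_fromBlocks_iff]
  refine ⟨fun ⟨hA, hB⟩ => ⟨hA, hB, ?_, hA⟩, fun ⟨hA, hB, _, _⟩ => ⟨hA, hB⟩⟩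
  rw [← hB, conjTranspose_conjTranspose, hB]

lemma re_star_dotProduct_map_add_I_smul_map_mulVec {ι : Type*} [Fintype ι] (A B : Matrix ι ι ℝ)
    (x : ι ⊕ ι → ℝ) :
    let z : ι → ℂ := fun i => ⟨x (.inl i), x (.inr i)⟩
    (star z ⬝ᵥ (A.map Complex.ofReal + Complex.I • B.map Complex.ofReal) *ᵥ z).re =
      x ⬝ᵥ fromBlocks A (-B) B A *ᵥ x := by
  simp only [dotProduct, mulVec, Fintype.sum_sum_type, Finset.mul_sum, Complex.re_sum,
    ← Finset.sum_add_distrib]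
  refine Finset.sum_congr rfl fun i _ => Finset.sum_congr rfl fun j _ => ?_
  simp only [Pi.star_apply, RCLike.star_def, Matrix.add_apply, map_apply, Matrix.smul_apply,
    smul_eq_mul, Complex.mul_re, Complex.conj_re, Complex.add_re, Complex.ofReal_re, Complex.I_re,
    zero_mul, Complex.I_im, Complex.ofReal_im, mul_zero, sub_self, add_zero, Complex.add_im,
    Complex.mul_im, one_mul, zero_add, Complex.conj_im, neg_mul, sub_neg_eq_add,
    fromBlocks_apply₁₁, fromBlocks_apply₁₂, Matrix.neg_apply, fromBlocks_apply₂₁,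
    fromBlocks_apply₂₂]
  ring

lemma posSemidef_map_add_I_smul_map_iff {ι : Type*} [Finite ι] {A B : Matrix ι ι ℝ} :
    (A.map Complex.ofReal + Complex.I • B.map Complex.ofReal).PosSemidef ↔
      (fromBlocks A (-B) B A).PosSemidef := by
  cases nonempty_fintype ι
  rw [posSemidef_iff_dotProduct_mulVec, posSemidef_iff_dotProduct_mulVec,
    isHermitian_map_add_I_smul_map_iff]
  refine and_congr_right fun h => ?_
  have him := (isHermitian_map_add_I_smul_map_iff.mpr h).im_star_dotProduct_mulVec_self
  refine ⟨fun hpos x => ?_, fun hpos z => ?_⟩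
  · rw [star_trivial, ← re_star_dotProduct_map_add_I_smul_map_mulVec]
    exact (Complex.nonneg_iff.mp (hpos _)).1
  · refine Complex.nonneg_iff.mpr ⟨?_, (him z).symm⟩
    exact (hpos (Sum.elim (Complex.re ∘ z) (Complex.im ∘ z))).trans_eq
      (re_star_dotProduct_map_add_I_smul_map_mulVec A B _).symm

lemma posDef_of_posSemidef_fromBlocks {m n 𝕜 : Type*} [Fintype m] [Finite n] [RCLike 𝕜]
    {A : Matrix m m 𝕜} {B : Matrix m n 𝕜} {C : Matrix n m 𝕜} {D : Matrix n n 𝕜}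
    (h : (fromBlocks A B C D).PosSemidef) (hC : Function.Injective C.mulVec) : A.PosDef := by
  cases nonempty_fintype n
  have hA : A.PosSemidef := h.submatrix Sum.inl
  refine .of_dotProduct_mulVec_pos hA.isHermitian fun x hx => ?_
  refine (hA.dotProduct_mulVec_nonneg x).lt_of_ne' fun hx0 => hx (hC ?_)
  have hker := (h.dotProduct_mulVec_zero_iff (Sum.elim x 0)).mp (by
    simpa [fromBlocks_mulVec, Function.star_sumElim] using hx0)
  simpa [fromBlocks_mulVec] using congrArg (· ∘ Sum.inr) hker

variable {l : Type*} [Fintype l] [DecidableEq l]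

lemma posSemidef_fromBlocks_J_iff {M : Matrix (l ⊕ l) (l ⊕ l) ℝ} :
    (fromBlocks M (J l ℝ) (J l ℝ)ᵀ M).PosSemidef ↔ M.PosDef ∧ symplPolar M ≤ M := by
  have schur (hM : M.PosDef) :
      (fromBlocks M (J l ℝ) (J l ℝ)ᵀ M).PosSemidef ↔ symplPolar M ≤ M := by
    have := hM.isUnit.invertible
    exact hM.fromBlocks₁₁ (J l ℝ) M
  refine ⟨fun h => ?_, fun ⟨hM, h⟩ => (schur hM).mpr h⟩
  have hM := posDef_of_posSemidef_fromBlocks h (mulVec_injective_of_isUnit (by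
    simpa using (isUnit_iff_isUnit_det _).mpr (isUnit_det_J l ℝ)))
  exact ⟨hM, (schur hM).mp h⟩

lemma symplJ_eq_neg_J (m : ℕ) : symplJ m = -J (Fin m) ℝ := by
  simp [symplJ, J, fromBlocks_neg]

lemma isSymplectic_iff_mem_symplecticGroup {m : ℕ} {S : Matrix (PS m) (PS m) ℝ} :
    IsSymplectic S ↔ S ∈ symplecticGroup (Fin m) ℝ := by
  simp [IsSymplectic, SymplecticGroup.mem_iff', symplJ_eq_neg_J]

lemma quantumCond_smul_iff {m : ℕ} {hbar : ℝ} (hhb : 0 < hbar) {M : Matrix (PS m) (PS m) ℝ} :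
    QuantumCond m hbar ((hbar / 2) • M) ↔ M.PosDef ∧ symplPolar M ≤ M := by
  have hmap : ((hbar / 2) • M).map Complex.ofReal = (hbar / 2) • M.map Complex.ofReal := by
    ext; simp
  rw [← posSemidef_fromBlocks_J_iff, J_transpose, ← neg_neg (J _ _), ← symplJ_eq_neg_J, neg_neg,
    ← posSemidef_map_add_I_smul_map_iff, QuantumCond, hmap, ← smul_add]
  have hpos : 0 < hbar / 2 := half_pos hhb
  refine ⟨fun h => ?_, fun h => h.smul hpos.le⟩
  simpa only [inv_smul_smul₀ hpos.ne'] using h.smul (inv_nonneg.mpr hpos.le)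

lemma QuantumCond.exists_smul_inv_le {m : ℕ} {hbar : ℝ} (hhb : 0 < hbar)
    {M : Matrix (PS m) (PS m) ℝ} (h : QuantumCond m hbar M) :
    ∃ S, IsSymplectic S ∧ (hbar / 2) • (Sᵀ * S)⁻¹ ≤ M := by
  have hM : M = (hbar / 2) • ((hbar / 2)⁻¹ • M) := (smul_inv_smul₀ (by positivity) M).symm
  rw [hM, quantumCond_smul_iff hhb] at h
  obtain ⟨S, hS, hSM⟩ := exists_inv_transpose_mul_self_le h.1 h.2
  refine ⟨S, isSymplectic_iff_mem_symplecticGroup.mpr hS, ?_⟩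
  rw [hM]
  gcongr

lemma IsSymplectic.quantumCond {m : ℕ} {hbar : ℝ} (hhb : 0 < hbar) {S : Matrix (PS m) (PS m) ℝ}
    (hS : IsSymplectic S) : QuantumCond m hbar ((hbar / 2) • (Sᵀ * S)⁻¹) := by
  rw [isSymplectic_iff_mem_symplecticGroup] at hS
  exact (quantumCond_smul_iff hhb).mpr
    ⟨posDef_inv_transpose_mul_self hS, (symplPolar_inv_transpose_mul_self hS).le⟩

lemma posSemidef_fromBlocks_zero {m n R : Type*} [Finite m] [Finite n] [Ring R] [PartialOrder R]
    [StarRing R] [AddLeftMono R] {A : Matrix m m R} {B : Matrix n n R} (hA : A.PosSemidef)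
    (hB : B.PosSemidef) : (fromBlocks A 0 0 B).PosSemidef := by
  cases nonempty_fintype m
  cases nonempty_fintype n
  refine .of_dotProduct_mulVec_nonneg (hA.isHermitian.fromBlocks (by simp) hB.isHermitian)
    fun x => ?_
  obtain ⟨u, v, rfl⟩ : ∃ u v, x = Sum.elim u v := ⟨_, _, (Sum.elim_comp_inl_inr x).symm⟩
  simpa [fromBlocks_mulVec, Function.star_sumElim] using
    add_nonneg (hA.dotProduct_mulVec_nonneg u) (hB.dotProduct_mulVec_nonneg v)

lemma fromBlocks_zero_le_fromBlocks_zero {m n 𝕜 : Type*} [Finite m] [Finite n] [RCLike 𝕜]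
    {A A' : Matrix m m 𝕜} {B B' : Matrix n n 𝕜} (hA : A ≤ A') (hB : B ≤ B') :
    fromBlocks A 0 0 B ≤ fromBlocks A' 0 0 B' := by
  rw [le_iff] at *
  simpa [sub_eq_add_neg, fromBlocks_neg, fromBlocks_add] using posSemidef_fromBlocks_zero hA hB

end Uncertainty

/-- for a real symmetric `2n×2n` matrix `Σ` (`n = n_A + n_B`), the Werner–Wolf
condition (existence of symmetric `Σ_A`, `Σ_B` satisfying the quantum conditions with
`Σ - Σ_A ⊕ Σ_B ≥ 0`) is equivalent to the existence of symplectic `S_A ∈ Sp(n_A)`,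
`S_B ∈ Sp(n_B)` with `Σ - (hbar/2)((S_AᵀS_A)⁻¹ ⊕ (S_BᵀS_B)⁻¹) ≥ 0`. -/
theorem statement3 (nA nB : ℕ) (hA : 0 < nA) (hB : 0 < nB) (hbar : ℝ) (hhb : 0 < hbar)
    (Sig : Matrix (PS nA ⊕ PS nB) (PS nA ⊕ PS nB) ℝ) (hsym : Sig.IsSymm) :
    (∃ (SigA : Matrix (PS nA) (PS nA) ℝ) (SigB : Matrix (PS nB) (PS nB) ℝ),
        SigA.IsSymm ∧ SigB.IsSymm ∧
        QuantumCond nA hbar SigA ∧ QuantumCond nB hbar SigB ∧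
        (Sig - Matrix.fromBlocks SigA 0 0 SigB).PosSemidef) ↔
    (∃ (SA : Matrix (PS nA) (PS nA) ℝ) (SB : Matrix (PS nB) (PS nB) ℝ),
        IsSymplectic SA ∧ IsSymplectic SB ∧
        (Sig - (hbar / 2) •
          Matrix.fromBlocks (SAᵀ * SA)⁻¹ 0 0 (SBᵀ * SB)⁻¹).PosSemidef) := by
  constructor
  · rintro ⟨SigA, SigB, -, -, hQA, hQB, hle⟩
    obtain ⟨SA, hSA, hleA⟩ := hQA.exists_smul_inv_le hhb
    obtain ⟨SB, hSB, hleB⟩ := hQB.exists_smul_inv_le hhb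
    refine ⟨SA, SB, hSA, hSB, ?_⟩
    rw [fromBlocks_smul, smul_zero, smul_zero]
    open scoped MatrixOrder in exact (fromBlocks_zero_le_fromBlocks_zero hleA hleB).trans hle
  · rintro ⟨SA, SB, hSA, hSB, hle⟩
    refine ⟨_, _, (isSymm_transpose_mul_self SA).inv.smul _,
      (isSymm_transpose_mul_self SB).inv.smul _, hSA.quantumCond hhb, hSB.quantumCond hhb, ?_⟩
    rwa [fromBlocks_smul, smul_zero, smul_zero] at hle
end
end

section
/- Let M_AB be an arbitrary real 2n_A×2n_B matrix, and let |M_AB| = (M_AB M_ABᵀ)^{1/2} and |M_BA| = (M_ABᵀ M_AB)^{1/2} denote the positive semidefinite square roots. Then for all z_A ∈ ℝ^{2n_A} and z_B ∈ ℝ^{2n_B}: 2⟨z_A, M_AB z_B⟩ ≤ ⟨|M_AB| z_A, z_A⟩ + ⟨|M_BA| z_B, z_B⟩. Consequently, for any real symmetric matrices M_AA (2n_A×2n_A) and M_BB (2n_B×2n_B), the block matrix M = [[M_AA, M_AB], [M_ABᵀ, M_BB]] satisfies: ((M_AA + |M_AB|) ⊕ (M_BB + |M_BA|)) − M is positive semidefinite.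 -/
open Matrix

noncomputable section

/-!
For a self-adjoint `H`, the continuous functional calculus gives `H ≤ |H|`. Apply this to
`H = [[0, M], [Mᴴ, 0]]`: since `H² = (M Mᴴ) ⊕ (Mᴴ M)`, uniqueness of the positive square root gives
`|H| = |M| ⊕ |Mᴴ|`, so `(|M| ⊕ |Mᴴ|) - H` is positive semidefinite. The scalar inequality is the
nonnegativity of its quadratic form, and the blocks `M_AA`, `M_BB` cancel in the difference.
-/

section FunctionalCalculus

variable {A : Type*} [NonUnitalRing A] [StarRing A] [TopologicalSpace A] [IsTopologicalRing A]
  [T2Space A] [Module ℝ A] [SMulCommClass ℝ A A] [IsScalarTower ℝ A A]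
  [NonUnitalContinuousFunctionalCalculus ℝ A IsSelfAdjoint]
  [PartialOrder A] [StarOrderedRing A] [NonnegSpectrumClass ℝ A]

theorem le_cfcAbs_of_isSelfAdjoint {a : A} (ha : IsSelfAdjoint a) : a ≤ CFC.abs a := by
  rw [← sub_nonneg, CFC.abs_sub_self a]
  exact nsmul_nonneg (CFC.negPart_nonneg a) 2

theorem le_of_mul_self_eq_mul_self {a b : A} (ha : IsSelfAdjoint a) (hb : 0 ≤ b)
    (h : b * b = a * a) : a ≤ b := by
  have habs : CFC.abs a = b := CFC.sqrt_unique (by rw [h, ha.star_eq])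
  exact habs ▸ le_cfcAbs_of_isSelfAdjoint ha

end FunctionalCalculus

section Blocks

variable {m n R : Type*}

theorem fromBlocks_sub_fromBlocks [AddGroup R] (A A' : Matrix m m R) (B B' : Matrix m n R)
    (C C' : Matrix n m R) (D D' : Matrix n n R) :
    fromBlocks A B C D - fromBlocks A' B' C' D' =
      fromBlocks (A - A') (B - B') (C - C') (D - D') := by
  simp only [sub_eq_add_neg, fromBlocks_neg, fromBlocks_add]

theorem posSemidef_fromBlocks_zero_zero [Ring R] [PartialOrder R] [StarRing R] [AddLeftMono R]
    {P : Matrix m m R} {Q : Matrix n n R} (hP : P.PosSemidef) (hQ : Q.PosSemidef) :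
    (fromBlocks P 0 0 Q).PosSemidef := by
  refine ⟨hP.isHermitian.fromBlocks conjTranspose_zero hQ.isHermitian, fun z ↦ ?_⟩
  obtain ⟨x, y, rfl⟩ : ∃ x y, z = Finsupp.sumElim x y :=
    ⟨_, _, (Finsupp.comapDomain_sumElim_comapDomain z).symm⟩
  simpa [Finsupp.sum_sumElim, Function.comp_def] using add_nonneg (hP.2 x) (hQ.2 y)

/-- The Hermitian dilation `[[0, M], [Mᴴ, 0]]` of a rectangular matrix `M`: a Hermitian matrix
whose absolute value is `|M| ⊕ |Mᴴ|`. -/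
def hermitianDilation [Zero R] [Star R] (M : Matrix m n R) : Matrix (m ⊕ n) (m ⊕ n) R :=
  fromBlocks 0 M Mᴴ 0

theorem isHermitian_hermitianDilation [AddMonoid R] [StarAddMonoid R] (M : Matrix m n R) :
    (hermitianDilation M).IsHermitian :=
  isHermitian_zero.fromBlocks rfl isHermitian_zero

theorem hermitianDilation_mul_self [Fintype m] [Fintype n] [NonUnitalNonAssocSemiring R] [Star R]
    (M : Matrix m n R) :
    hermitianDilation M * hermitianDilation M = fromBlocks (M * Mᴴ) 0 0 (Mᴴ * M) := by
  simp [hermitianDilation, fromBlocks_multiply]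

end Blocks

section AbsoluteValue

open scoped ComplexOrder MatrixOrder

variable {m n 𝕜 : Type*} [Fintype m] [Fintype n] [RCLike 𝕜]

theorem re_star_dotProduct_hermitianDilation_mulVec (M : Matrix m n 𝕜) (x : m → 𝕜) (y : n → 𝕜) :
    RCLike.re (star (Sum.elim x y) ⬝ᵥ (hermitianDilation M *ᵥ Sum.elim x y)) =
      2 * RCLike.re (star x ⬝ᵥ (M *ᵥ y)) := by
  have hconj : star y ⬝ᵥ (Mᴴ *ᵥ x) = star (star x ⬝ᵥ (M *ᵥ y)) := by
    rw [star_dotProduct, star_mulVec, conjTranspose_conjTranspose, ← dotProduct_mulVec]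
  simp only [hermitianDilation, fromBlocks_mulVec, Function.star_sumElim,
    sumElim_dotProduct_sumElim, Sum.elim_comp_inl, Sum.elim_comp_inr, zero_mulVec, zero_add,
    add_zero, hconj, map_add, RCLike.star_def, RCLike.conj_re]
  ring

variable {M : Matrix m n 𝕜} {P : Matrix m m 𝕜} {Q : Matrix n n 𝕜}

theorem posSemidef_fromBlocks_sub_hermitianDilation (hP : P.PosSemidef) (hPM : P * P = M * Mᴴ)
    (hQ : Q.PosSemidef) (hQM : Q * Q = Mᴴ * M) :
    (fromBlocks P 0 0 Q - hermitianDilation M).PosSemidef := by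
  classical
  have hsq : fromBlocks P 0 0 Q * fromBlocks P 0 0 Q =
      hermitianDilation M * hermitianDilation M := by
    simp [hermitianDilation_mul_self, fromBlocks_multiply, hPM, hQM]
  exact le_of_mul_self_eq_mul_self (isHermitian_hermitianDilation M).isSelfAdjoint
    (posSemidef_fromBlocks_zero_zero hP hQ).nonneg hsq

theorem two_mul_re_star_dotProduct_mulVec_le (hP : P.PosSemidef) (hPM : P * P = M * Mᴴ)
    (hQ : Q.PosSemidef) (hQM : Q * Q = Mᴴ * M) (x : m → 𝕜) (y : n → 𝕜) :
    2 * RCLike.re (star x ⬝ᵥ (M *ᵥ y)) ≤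
      RCLike.re (star x ⬝ᵥ (P *ᵥ x)) + RCLike.re (star y ⬝ᵥ (Q *ᵥ y)) := by
  have hform := (posSemidef_fromBlocks_sub_hermitianDilation hP hPM hQ hQM).re_dotProduct_nonneg
    (Sum.elim x y)
  rw [sub_mulVec, dotProduct_sub, map_sub, re_star_dotProduct_hermitianDilation_mulVec,
    sub_nonneg] at hform
  simpa [fromBlocks_mulVec, Function.star_sumElim, sumElim_dotProduct_sumElim] using hform

theorem posSemidef_fromBlocks_add_sub_fromBlocks (hP : P.PosSemidef) (hPM : P * P = M * Mᴴ)
    (hQ : Q.PosSemidef) (hQM : Q * Q = Mᴴ * M) (A : Matrix m m 𝕜) (D : Matrix n n 𝕜) :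
    (fromBlocks (A + P) 0 0 (D + Q) - fromBlocks A M Mᴴ D).PosSemidef := by
  have hcancel : fromBlocks (A + P) 0 0 (D + Q) - fromBlocks A M Mᴴ D =
      fromBlocks P 0 0 Q - hermitianDilation M := by
    simp [hermitianDilation, fromBlocks_sub_fromBlocks]
  exact hcancel ▸ posSemidef_fromBlocks_sub_hermitianDilation hP hPM hQ hQM

theorem statement12_general (hP : P.PosSemidef) (hPM : P * P = M * Mᴴ)
    (hQ : Q.PosSemidef) (hQM : Q * Q = Mᴴ * M) :
    (∀ (x : m → 𝕜) (y : n → 𝕜),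
        2 * RCLike.re (star x ⬝ᵥ (M *ᵥ y)) ≤
          RCLike.re (star x ⬝ᵥ (P *ᵥ x)) + RCLike.re (star y ⬝ᵥ (Q *ᵥ y))) ∧
      ∀ (A : Matrix m m 𝕜) (D : Matrix n n 𝕜),
        (fromBlocks (A + P) 0 0 (D + Q) - fromBlocks A M Mᴴ D).PosSemidef :=
  ⟨two_mul_re_star_dotProduct_mulVec_le hP hPM hQ hQM,
    posSemidef_fromBlocks_add_sub_fromBlocks hP hPM hQ hQM⟩

end AbsoluteValue

/-- for any real `2n_A×2n_B` matrix `M_AB`, with `|M_AB|` and `|M_BA|` the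
positive semidefinite square roots of `M_AB M_ABᵀ` and `M_ABᵀ M_AB`, one has
`2⟨z_A, M_AB z_B⟩ ≤ ⟨|M_AB|z_A, z_A⟩ + ⟨|M_BA|z_B, z_B⟩` for all `z_A`, `z_B`; consequently
`((M_AA + |M_AB|) ⊕ (M_BB + |M_BA|)) - M` is positive semidefinite for any symmetric
`M_AA`, `M_BB`, where `M = [[M_AA, M_AB], [M_ABᵀ, M_BB]]`. -/
theorem statement12 (nA nB : ℕ) (hA : 0 < nA) (hB : 0 < nB)
    (MAB : Matrix (Fin (2*nA)) (Fin (2*nB)) ℝ)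
    (absA : Matrix (Fin (2*nA)) (Fin (2*nA)) ℝ)
    (absB : Matrix (Fin (2*nB)) (Fin (2*nB)) ℝ)
    (habsA : absA.PosSemidef) (habsAsq : absA * absA = MAB * MABᵀ)
    (habsB : absB.PosSemidef) (habsBsq : absB * absB = MABᵀ * MAB) :
    (∀ (zA : Fin (2*nA) → ℝ) (zB : Fin (2*nB) → ℝ),
        2 * (zA ⬝ᵥ (MAB *ᵥ zB)) ≤ (absA *ᵥ zA) ⬝ᵥ zA + (absB *ᵥ zB) ⬝ᵥ zB) ∧
    (∀ (MAA : Matrix (Fin (2*nA)) (Fin (2*nA)) ℝ)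
        (MBB : Matrix (Fin (2*nB)) (Fin (2*nB)) ℝ), MAA.IsSymm → MBB.IsSymm →
        (Matrix.fromBlocks (MAA + absA) 0 0 (MBB + absB) -
          Matrix.fromBlocks MAA MAB MABᵀ MBB).PosSemidef) := by
  obtain ⟨hle, hpsd⟩ := statement12_general (M := MAB) habsA habsAsq habsB habsBsq
  exact ⟨fun zA zB ↦ by simpa [dotProduct_comm] using hle zA zB, fun MAA MBB _ _ ↦ hpsd MAA MBB⟩
end
end
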